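/- The eigenspace Λ²₁₄ = {α : ⋆(φ₀ ∧ α) = α} coincides with the kernel of the map α ↦ (⋆φ₀) ∧ α from Λ²(ℝ⁷)* to Λ⁶(ℝ⁷)*. -/

import Mathlib

open scoped RealInnerProductSpace
open Finset

noncomputable section

/-- ℝ⁷ with its standard inner product. -/
abbrev E7 := EuclideanSpace ℝ (Fin 7)

/-- standard orthonormal basis vectors e₁,…,e₇ (0-indexed). -/
def e (i : Fin 7) : E7 := EuclideanSpace.single i 1

/-- the 3×3 minor ε^{abc}(x,y,z) (a determinant of components). -/
def tdet (a b c : Fin 7) (x y z : E7) : ℝ :=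
  Matrix.det !![x a, x b, x c; y a, y b, y c; z a, z b, z c]

/-- the standard G₂ 3-form φ₀ = ε¹²³ + ε¹∧(ε⁴⁵−ε⁶⁷) + ε²∧(ε⁴⁶−ε⁷⁵) + ε³∧(ε⁴⁷−ε⁵⁶),
with indices shifted to be 0-based. -/
def phi0 (x y z : E7) : ℝ :=
  tdet 0 1 2 x y z + (tdet 0 3 4 x y z - tdet 0 5 6 x y z)
    + (tdet 1 3 5 x y z - tdet 1 6 4 x y z)
    + (tdet 2 3 6 x y z - tdet 2 4 5 x y z)

/-- the cross product on ℝ⁷: the unique vector with ⟨x × y, z⟩ = φ₀(x,y,z). -/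
def cross (x y : E7) : E7 := (WithLp.equiv 2 _).symm (fun i => phi0 x y (e i))

/-- components of φ₀ in the standard basis. -/
def phi0c (i j k : Fin 7) : ℝ := phi0 (e i) (e j) (e k)

/-- a function `Fin 7 → Fin 7 → ℝ` represents a 2-form (resp. 2-vector) by its
components iff it is antisymmetric. -/
def Alt2 (α : Fin 7 → Fin 7 → ℝ) : Prop := ∀ i j, α j i = - α i j

/-- components of the basis 2-form εⁱ∧εʲ. -/
def bf (i j a b : Fin 7) : ℝ :=
  (if a = i ∧ b = j then (1:ℝ) else 0) - (if a = j ∧ b = i then (1:ℝ) else 0)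

/-- The operator L(α) = ⋆(φ₀ ∧ α) on 2-forms, expressed in components:
(L α)_{ij} is the coefficient of the volume form in the 7-form φ₀ ∧ α ∧ εⁱ∧εʲ,
i.e. ⟨L α, γ⟩ vol = φ₀ ∧ α ∧ γ for all 2-forms γ. -/
def Lop (α : Fin 7 → Fin 7 → ℝ) (i j : Fin 7) : ℝ :=
  (1/24) * ∑ σ : Equiv.Perm (Fin 7),
    ((Equiv.Perm.sign σ : ℤ) : ℝ) * phi0c (σ 0) (σ 1) (σ 2) * α (σ 3) (σ 4) * bf i j (σ 5) (σ 6)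

/-- Kronecker delta on indices. -/
def ind (p q : Fin 7) : ℝ := if p = q then 1 else 0

/-- components of the basis 4-form εⁱ∧εʲ∧εᵏ∧εˡ. -/
def bf4 (i j k l a b c d : Fin 7) : ℝ :=
  Matrix.det !![ind i a, ind i b, ind i c, ind i d;
                ind j a, ind j b, ind j c, ind j d;
                ind k a, ind k b, ind k c, ind k d;
                ind l a, ind l b, ind l c, ind l d]

/-- components of the 4-form ⋆φ₀: (⋆φ₀)_{ijkl} is the coefficient of the volume
form in φ₀ ∧ εⁱ∧εʲ∧εᵏ∧εˡ. -/
def psic (i j k l : Fin 7) : ℝ :=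
  (1/144) * ∑ σ : Equiv.Perm (Fin 7),
    ((Equiv.Perm.sign σ : ℤ) : ℝ) * phi0c (σ 0) (σ 1) (σ 2) * bf4 i j k l (σ 3) (σ 4) (σ 5) (σ 6)

/-- the 6-form (⋆φ₀) ∧ α evaluated on a 6-tuple of basis vectors. -/
def starPhiWedge (α : Fin 7 → Fin 7 → ℝ) (a : Fin 6 → Fin 7) : ℝ :=
  ∑ σ : Equiv.Perm (Fin 6),
    ((Equiv.Perm.sign σ : ℤ) : ℝ) * psic (a (σ 0)) (a (σ 1)) (a (σ 2)) (a (σ 3))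
      * α (a (σ 4)) (a (σ 5))


theorem ind_comm (p q : Fin 7) : ind p q = ind q p := by
  simp only [ind, eq_comm]

theorem perm_sum_succ {n : ℕ} (F : Equiv.Perm (Fin (n+1)) → ℝ) :
    ∑ σ : Equiv.Perm (Fin (n+1)), ((Equiv.Perm.sign σ : ℤ) : ℝ) * F σ
      = ∑ p : Fin (n+1), (if p = 0 then (1:ℝ) else -1) * ∑ τ : Equiv.Perm (Fin n),
        ((Equiv.Perm.sign τ : ℤ) : ℝ) * F (Equiv.Perm.decomposeFin.symm (p, τ)) := by
  rw [← Equiv.sum_comp Equiv.Perm.decomposeFin.symm, Fintype.sum_prod_type]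
  refine Finset.sum_congr rfl fun p _ => ?_
  rw [Finset.mul_sum]
  refine Finset.sum_congr rfl fun τ _ => ?_
  rw [Equiv.Perm.decomposeFin.symm_sign]
  split_ifs <;> simp

/-- antisymmetrized sum of `F` over all rearrangements of the tuple `a`. -/
def asum {n : ℕ} (F : (Fin n → Fin 7) → ℝ) (a : Fin n → Fin 7) : ℝ :=
  ∑ τ : Equiv.Perm (Fin n), ((Equiv.Perm.sign τ : ℤ) : ℝ) * F (fun i => a (τ i))

theorem asum_succ {n : ℕ} (F : (Fin (n+1) → Fin 7) → ℝ) (a : Fin (n+1) → Fin 7) :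
    asum F a = ∑ p : Fin (n+1), (if p = 0 then (1:ℝ) else -1) *
      asum (fun b => F (Fin.cons (a p) b)) (fun i => a (Equiv.swap 0 p i.succ)) := by
  unfold asum
  rw [perm_sum_succ]
  refine Finset.sum_congr rfl fun p _ => ?_
  congr 1
  refine Finset.sum_congr rfl fun τ _ => ?_
  congr 2
  funext i
  refine Fin.cases ?_ (fun i => ?_) i
  · simp
  · simp

theorem asum_perm {n : ℕ} (F : (Fin n → Fin 7) → ℝ) (a : Fin n → Fin 7)
    (π : Equiv.Perm (Fin n)) :
    asum F (fun i => a (π i)) = ((Equiv.Perm.sign π : ℤ) : ℝ) * asum F a := by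
  unfold asum
  rw [← Equiv.sum_comp (Equiv.mulLeft π) (fun τ : Equiv.Perm (Fin n) =>
    ((Equiv.Perm.sign τ : ℤ) : ℝ) * F (fun i => a (τ i))), Finset.mul_sum]
  refine Finset.sum_congr rfl fun τ _ => ?_
  have h : ((Equiv.Perm.sign π : ℤ) : ℝ) * ((Equiv.Perm.sign π : ℤ) : ℝ) = 1 := by
    rcases Int.units_eq_one_or (Equiv.Perm.sign π) with h | h <;> simp [h]
  simp only [Equiv.coe_mulLeft, Equiv.Perm.sign_mul, Units.val_mul, Int.cast_mul, Equiv.Perm.mul_apply]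
  rw [← mul_assoc, ← mul_assoc, h, one_mul]

theorem asum_one (F : (Fin 1 → Fin 7) → ℝ) (a : Fin 1 → Fin 7) : asum F a = F a := by
  simp [asum]

theorem asum_two (F : (Fin 2 → Fin 7) → ℝ) (x y : Fin 7) :
    asum F ![x, y] = F ![x, y] - F ![y, x] := by
  rw [asum_succ, Fin.sum_univ_two, asum_one, asum_one]
  have h0 : (Fin.cons x (fun i : Fin 1 => ![x, y] (Equiv.swap 0 0 i.succ)) : Fin 2 → Fin 7) = ![x, y] := by
    funext i; fin_cases i <;> rfl
  have h1 : (Fin.cons y (fun i : Fin 1 => ![x, y] (Equiv.swap 0 1 i.succ)) : Fin 2 → Fin 7) = ![y, x] := by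
    funext i; fin_cases i <;> rfl
  simp only [Matrix.cons_val_zero, Matrix.cons_val_one, h0, h1]
  simp [sub_eq_add_neg]

theorem asum_three (F : (Fin 3 → Fin 7) → ℝ) (x y z : Fin 7) :
    asum F ![x, y, z] = asum (fun b => F (Fin.cons x b)) ![y, z]
      - asum (fun b => F (Fin.cons y b)) ![x, z] - asum (fun b => F (Fin.cons z b)) ![y, x] := by
  rw [asum_succ, Fin.sum_univ_three]
  have h0 : (fun i : Fin 2 => ![x, y, z] (Equiv.swap 0 0 i.succ)) = ![y, z] := by
    funext i; fin_cases i <;> rfl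
  have h1 : (fun i : Fin 2 => ![x, y, z] (Equiv.swap 0 1 i.succ)) = ![x, z] := by
    funext i; fin_cases i <;> rfl
  have h2 : (fun i : Fin 2 => ![x, y, z] (Equiv.swap 0 2 i.succ)) = ![y, x] := by
    funext i; fin_cases i <;> rfl
  rw [h0, h1, h2]
  simp [sub_eq_add_neg]

theorem asum_four (F : (Fin 4 → Fin 7) → ℝ) (x y z w : Fin 7) :
    asum F ![x, y, z, w] = asum (fun b => F (Fin.cons x b)) ![y, z, w]
      - asum (fun b => F (Fin.cons y b)) ![x, z, w] - asum (fun b => F (Fin.cons z b)) ![y, x, w]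
      - asum (fun b => F (Fin.cons w b)) ![y, z, x] := by
  rw [asum_succ, Fin.sum_univ_four]
  have h0 : (fun i : Fin 3 => ![x, y, z, w] (Equiv.swap 0 0 i.succ)) = ![y, z, w] := by
    funext i; fin_cases i <;> rfl
  have h1 : (fun i : Fin 3 => ![x, y, z, w] (Equiv.swap 0 1 i.succ)) = ![x, z, w] := by
    funext i; fin_cases i <;> rfl
  have h2 : (fun i : Fin 3 => ![x, y, z, w] (Equiv.swap 0 2 i.succ)) = ![y, x, w] := by
    funext i; fin_cases i <;> rfl
  have h3 : (fun i : Fin 3 => ![x, y, z, w] (Equiv.swap 0 3 i.succ)) = ![y, z, x] := by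
    funext i; fin_cases i <;> rfl
  rw [h0, h1, h2, h3]
  simp [sub_eq_add_neg]

/-- If the tuple is injective, a delta on the first entry pins the first entry. -/
theorem asum_pin {n : ℕ} (F : (Fin n → Fin 7) → ℝ) (a : Fin (n+1) → Fin 7)
    (ha : Function.Injective a) :
    asum (fun b => ind (a 0) (b 0) * F (fun i => b i.succ)) a = asum F (fun i => a i.succ) := by
  rw [asum_succ, Finset.sum_eq_single 0]
  · have h : (fun i : Fin n => a (Equiv.swap 0 0 i.succ)) = fun i => a i.succ := by
      funext i; simp
    rw [h]; simp [ind]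
  · intro p _ hp
    have : a 0 ≠ a p := fun h => hp (ha h).symm
    simp [ind, this, asum]
  · simp

/-- A delta against a value missing from the tuple kills the sum. -/
theorem asum_miss {n : ℕ} (F : (Fin n → Fin 7) → ℝ) (a : Fin n → Fin 7) (k : Fin n) (q : Fin 7)
    (ha : ∀ i, a i ≠ q) :
    asum (fun b => ind q (b k) * F b) a = 0 := by
  unfold asum
  refine Finset.sum_eq_zero fun τ _ => ?_
  have : q ≠ a (τ k) := fun h => ha _ h.symm
  simp [ind, this]

theorem asum_add {n : ℕ} (F G : (Fin n → Fin 7) → ℝ) (a : Fin n → Fin 7) :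
    asum (fun b => F b + G b) a = asum F a + asum G a := by
  simp only [asum, mul_add, Finset.sum_add_distrib]

theorem asum_sub {n : ℕ} (F G : (Fin n → Fin 7) → ℝ) (a : Fin n → Fin 7) :
    asum (fun b => F b - G b) a = asum F a - asum G a := by
  simp only [asum, mul_sub, Finset.sum_sub_distrib]

theorem sign_sq {n : ℕ} (π : Equiv.Perm (Fin n)) :
    ((Equiv.Perm.sign π : ℤ) : ℝ) * ((Equiv.Perm.sign π : ℤ) : ℝ) = 1 := by
  rcases Int.units_eq_one_or (Equiv.Perm.sign π) with h | h <;> simp [h]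

theorem asum_comp {n : ℕ} (F : (Fin n → Fin 7) → ℝ) (a : Fin n → Fin 7)
    (π : Equiv.Perm (Fin n)) :
    asum (fun b => F (fun i => b (π i))) a = ((Equiv.Perm.sign π : ℤ) : ℝ) * asum F a := by
  unfold asum
  rw [← Equiv.sum_comp (Equiv.mulRight π) (fun τ : Equiv.Perm (Fin n) =>
    ((Equiv.Perm.sign τ : ℤ) : ℝ) * F (fun i => a (τ i))), Finset.mul_sum]
  refine Finset.sum_congr rfl fun τ _ => ?_
  simp only [Equiv.coe_mulRight, Equiv.Perm.sign_mul, Units.val_mul, Int.cast_mul,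
    Equiv.Perm.mul_apply]
  linear_combination (-(((Equiv.Perm.sign τ : ℤ) : ℝ) * F fun i => a (τ (π i)))) * sign_sq π

/-- Antisymmetrizing against a determinant of deltas is the same, up to a factorial, as
antisymmetrizing against the product of the deltas. -/
theorem asum_det {n k : ℕ} (f : Fin k ↪ Fin n) (q : Fin k → Fin 7) (H : (Fin n → Fin 7) → ℝ)
    (hH : ∀ b b' : Fin n → Fin 7, (∀ j, j ∉ Set.range f → b j = b' j) → H b = H b')
    (a : Fin n → Fin 7) :
    asum (fun b => (Matrix.of fun i j : Fin k => ind (q i) (b (f j))).det * H b) a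
      = (k.factorial : ℝ) * asum (fun b => (∏ i, ind (q i) (b (f i))) * H b) a := by
  have key : ∀ π : Equiv.Perm (Fin k),
      asum (fun b => (∏ i, ind (q i) (b (f (π i)))) * H b) a
        = ((Equiv.Perm.sign π : ℤ) : ℝ) * asum (fun b => (∏ i, ind (q i) (b (f i))) * H b) a := by
    intro π
    have h := asum_comp (fun b => (∏ i, ind (q i) (b (f i))) * H b) a (π.viaFintypeEmbedding f)
    rw [Equiv.Perm.viaFintypeEmbedding_sign] at h
    rw [← h]
    congr 1
    funext b
    simp only [Equiv.Perm.viaFintypeEmbedding_apply_image]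
    congr 1
    apply hH
    intro j hj
    rw [Equiv.Perm.viaFintypeEmbedding_apply_notMem_range _ _ hj]
  have hdet : (fun b : Fin n → Fin 7 =>
      (Matrix.of fun i j : Fin k => ind (q i) (b (f j))).det * H b) =
      fun b => ∑ π : Equiv.Perm (Fin k), ((Equiv.Perm.sign π : ℤ) : ℝ) *
        ((∏ i, ind (q i) (b (f (π i)))) * H b) := by
    funext b
    rw [← Matrix.det_transpose, Matrix.det_apply', Finset.sum_mul]
    refine Finset.sum_congr rfl fun π _ => ?_
    simp [mul_assoc]
  rw [hdet]
  have hlin : asum (fun b => ∑ π : Equiv.Perm (Fin k), ((Equiv.Perm.sign π : ℤ) : ℝ) *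
        ((∏ i, ind (q i) (b (f (π i)))) * H b)) a = ∑ π : Equiv.Perm (Fin k),
        ((Equiv.Perm.sign π : ℤ) : ℝ) * asum (fun b => (∏ i, ind (q i) (b (f (π i)))) * H b) a := by
    simp only [asum, Finset.mul_sum]
    rw [Finset.sum_comm]
    refine Finset.sum_congr rfl fun _ _ => Finset.sum_congr rfl fun _ _ => by ring
  rw [hlin]
  simp only [key, ← mul_assoc, sign_sq, one_mul]
  simp [Fintype.card_perm]

theorem det3_of (a b c d e f g h i : ℝ) : Matrix.det !![a, b, c; d, e, f; g, h, i] =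
    a * e * i - a * f * h - b * d * i + b * f * g + c * d * h - c * e * g := by
  rw [Matrix.det_fin_three]
  rfl

/-- the 3×3 determinant of deltas -/
def d3 (x y z i j k : Fin 7) : ℝ :=
  Matrix.det !![ind x i, ind x j, ind x k; ind y i, ind y j, ind y k; ind z i, ind z j, ind z k]

theorem tdet_e (x y z i j k : Fin 7) : tdet x y z (e i) (e j) (e k) = d3 x y z i j k := by
  have h : ∀ p q : Fin 7, (e p) q = ind q p := by
    intro p q; simp [e, ind]
  simp only [tdet, d3, h, det3_of]
  ring

theorem phi0c_eq (i j k : Fin 7) : phi0c i j k =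
    d3 0 1 2 i j k + (d3 0 3 4 i j k - d3 0 5 6 i j k)
    + (d3 1 3 5 i j k - d3 1 6 4 i j k) + (d3 2 3 6 i j k - d3 2 4 5 i j k) := by
  simp only [phi0c, phi0, tdet_e]

/-- antisymmetrization of a function of four indices -/
def asum4 (G : Fin 7 → Fin 7 → Fin 7 → Fin 7 → ℝ) (a : Fin 4 → Fin 7) : ℝ :=
  asum (fun b => G (b 0) (b 1) (b 2) (b 3)) a

theorem d3_term (G : Fin 7 → Fin 7 → Fin 7 → Fin 7 → ℝ) (a : Fin 7 → Fin 7)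
    (π : Equiv.Perm (Fin 7)) (h : ∀ i, a i = π i) (x y z : Fin 7) (hx : x = a 0)
    (hy : y = a 1) (hz : z = a 2) :
    asum (fun b : Fin 7 → Fin 7 => d3 x y z (b 0) (b 1) (b 2)
      * G (b 3) (b 4) (b 5) (b 6)) (fun i => i)
      = 6 * (((Equiv.Perm.sign π : ℤ) : ℝ) * asum4 G ![a 3, a 4, a 5, a 6]) := by
  subst hx hy hz
  have hinj : Function.Injective a := by
    have : a = π := funext h
    rw [this]; exact π.injective
  have hd := asum_det (Fin.castLEEmb (show 3 ≤ 7 by norm_num)) ![a 0, a 1, a 2]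
    (fun b : Fin 7 → Fin 7 => G (b 3) (b 4) (b 5) (b 6)) (by
      intro b b' hb
      have h3 := hb 3 (by rintro ⟨j, hj⟩; revert hj; revert j; decide)
      have h4 := hb 4 (by rintro ⟨j, hj⟩; revert hj; revert j; decide)
      have h5 := hb 5 (by rintro ⟨j, hj⟩; revert hj; revert j; decide)
      have h6 := hb 6 (by rintro ⟨j, hj⟩; revert hj; revert j; decide)
      simp only [h3, h4, h5, h6]) (fun i => i)
  have e1 : (fun b : Fin 7 → Fin 7 => d3 (a 0) (a 1) (a 2) (b 0) (b 1) (b 2)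
      * G (b 3) (b 4) (b 5) (b 6)) = fun b => (Matrix.of fun i j : Fin 3 =>
        ind ((![a 0, a 1, a 2] : Fin 3 → Fin 7) i)
          (b (Fin.castLEEmb (show 3 ≤ 7 by norm_num) j))).det * G (b 3) (b 4) (b 5) (b 6) := by
    funext b
    congr 1
  rw [e1, hd]
  have e2 : (fun b : Fin 7 → Fin 7 => (∏ i : Fin 3, ind ((![a 0, a 1, a 2] : Fin 3 → Fin 7) i)
      (b (Fin.castLEEmb (show 3 ≤ 7 by norm_num) i))) * G (b 3) (b 4) (b 5) (b 6))
      = fun b => ind (a 0) (b 0) * (ind (a 1) (b 1) * (ind (a 2) (b 2) *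
          G (b 3) (b 4) (b 5) (b 6))) := by
    funext b
    rw [Fin.prod_univ_three, mul_assoc, mul_assoc]
    rfl
  rw [e2]
  have e3 := asum_perm (fun b : Fin 7 → Fin 7 => ind (a 0) (b 0) * (ind (a 1) (b 1) *
    (ind (a 2) (b 2) * G (b 3) (b 4) (b 5) (b 6)))) (fun i => i) π
  have e4 : (fun i => π i) = a := (funext h).symm
  simp only [e4] at e3
  have e5 : asum (fun b : Fin 7 → Fin 7 => ind (a 0) (b 0) * (ind (a 1) (b 1) *
      (ind (a 2) (b 2) * G (b 3) (b 4) (b 5) (b 6)))) a = asum4 G ![a 3, a 4, a 5, a 6] := by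
    have s1 := asum_pin (fun b : Fin 6 → Fin 7 => ind (a 1) (b 0) *
      (ind (a 2) (b 1) * G (b 2) (b 3) (b 4) (b 5))) a hinj
    have s2 := asum_pin (fun b : Fin 5 → Fin 7 => ind (a 2) (b 0) *
      G (b 1) (b 2) (b 3) (b 4)) (fun i => a i.succ) (hinj.comp (Fin.succ_injective _))
    have s3 := asum_pin (fun b : Fin 4 → Fin 7 => G (b 0) (b 1) (b 2) (b 3))
      (fun i => a i.succ.succ)
      (hinj.comp ((Fin.succ_injective _).comp (Fin.succ_injective _)))
    refine (s1.trans (s2.trans s3)).trans ?_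
    unfold asum4
    congr 1
    funext i
    fin_cases i <;> rfl
  rw [e5] at e3
  have hfac : ((Nat.factorial 3 : ℕ) : ℝ) = 6 := by norm_num [Nat.factorial]
  rw [hfac]
  congr 1
  linear_combination (-((Equiv.Perm.sign π : ℤ) : ℝ)) * e3 - (asum (fun b : Fin 7 → Fin 7 => ind (a 0) (b 0) * (ind (a 1) (b 1) *
      (ind (a 2) (b 2) * G (b 3) (b 4) (b 5) (b 6)))) (fun i => i)) * sign_sq π

theorem asum4_expand (G : Fin 7 → Fin 7 → Fin 7 → Fin 7 → ℝ) (x y z w : Fin 7) :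
    asum4 G ![x, y, z, w] =
      G x y z w - G x y w z - G x z y w + G x z w y - G x w z y + G x w y z
     - G y x z w + G y x w z + G y z x w - G y z w x + G y w z x - G y w x z
     - G z y x w + G z y w x + G z x y w - G z x w y + G z w x y - G z w y x
     - G w y z x + G w y x z + G w z y x - G w z x y + G w x z y - G w x y z := by
  unfold asum4
  simp only [asum_four, asum_three, asum_two]
  have h0 : ∀ (p : Fin 7) (b : Fin 3 → Fin 7), (Fin.cons p b : Fin 4 → Fin 7) 0 = p := fun _ _ => rfl
  have h1 : ∀ (p : Fin 7) (b : Fin 3 → Fin 7), (Fin.cons p b : Fin 4 → Fin 7) 1 = b 0 := fun _ _ => rfl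
  have h2 : ∀ (p : Fin 7) (b : Fin 3 → Fin 7), (Fin.cons p b : Fin 4 → Fin 7) 2 = b 1 := fun _ _ => rfl
  have h3 : ∀ (p : Fin 7) (b : Fin 3 → Fin 7), (Fin.cons p b : Fin 4 → Fin 7) 3 = b 2 := fun _ _ => rfl
  have g0 : ∀ (p : Fin 7) (b : Fin 2 → Fin 7), (Fin.cons p b : Fin 3 → Fin 7) 0 = p := fun _ _ => rfl
  have g1 : ∀ (p : Fin 7) (b : Fin 2 → Fin 7), (Fin.cons p b : Fin 3 → Fin 7) 1 = b 0 := fun _ _ => rfl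
  have g2 : ∀ (p : Fin 7) (b : Fin 2 → Fin 7), (Fin.cons p b : Fin 3 → Fin 7) 2 = b 1 := fun _ _ => rfl
  simp only [h0, h1, h2, h3, g0, g1, g2, Matrix.cons_val_zero, Matrix.cons_val_one]
  ring

theorem bf4_expand (i j k l a b c d : Fin 7) : bf4 i j k l a b c d =
    ind i a * d3 j k l b c d - ind i b * d3 j k l a c d
      + ind i c * d3 j k l a b d - ind i d * d3 j k l a b c := by
  unfold bf4 d3
  rw [Matrix.det_succ_row_zero, Fin.sum_univ_four]
  simp [Matrix.det_fin_three, Fin.succAbove, Matrix.submatrix, Fin.lt_def]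
  ring

theorem asum4_bf4 (i j k l x y z w : Fin 7) :
    asum4 (fun x y z w => bf4 i j k l x y z w) ![x, y, z, w] = 24 * bf4 i j k l x y z w := by
  rw [asum4_expand]
  simp only [bf4_expand, d3, det3_of]
  ring

/-- one term of the operator `L` -/
def lterm (α : Fin 7 → Fin 7 → ℝ) (i j x y z w : Fin 7) : ℝ :=
  α x y * bf i j z w - α x z * bf i j y w + α x w * bf i j y z
    + α y z * bf i j x w - α y w * bf i j x z + α z w * bf i j x y

theorem bf_swap (i j x y : Fin 7) : bf i j y x = - bf i j x y := by
  unfold bf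
  simp only [and_comm, neg_sub]

theorem asum4_bf (α : Fin 7 → Fin 7 → ℝ) (hα : Alt2 α) (i j x y z w : Fin 7) :
    asum4 (fun x y z w => α x y * bf i j z w) ![x, y, z, w] = 4 * lterm α i j x y z w := by
  rw [asum4_expand, lterm]
  rw [hα x y, hα x z, hα x w, hα y z, hα y w, hα z w, bf_swap i j x y, bf_swap i j x z,
    bf_swap i j x w, bf_swap i j y z, bf_swap i j y w, bf_swap i j z w]
  ring

theorem phi_sum (G : Fin 7 → Fin 7 → Fin 7 → Fin 7 → ℝ) :
    asum (fun b : Fin 7 → Fin 7 => phi0c (b 0) (b 1) (b 2) * G (b 3) (b 4) (b 5) (b 6)) (fun i => i) =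
      6 * (asum4 G ![3, 4, 5, 6] + asum4 G ![1, 2, 5, 6] - asum4 G ![1, 2, 3, 4] + asum4 G ![0, 2, 4, 6] + asum4 G ![0, 2, 3, 5] + asum4 G ![0, 1, 4, 5] - asum4 G ![0, 1, 3, 6]) := by
  have hs : (fun b : Fin 7 → Fin 7 => phi0c (b 0) (b 1) (b 2) * G (b 3) (b 4) (b 5) (b 6)) =
      fun b => d3 0 1 2 (b 0) (b 1) (b 2) * G (b 3) (b 4) (b 5) (b 6) + d3 0 3 4 (b 0) (b 1) (b 2) * G (b 3) (b 4) (b 5) (b 6) - d3 0 5 6 (b 0) (b 1) (b 2) * G (b 3) (b 4) (b 5) (b 6) + d3 1 3 5 (b 0) (b 1) (b 2) * G (b 3) (b 4) (b 5) (b 6) - d3 1 6 4 (b 0) (b 1) (b 2) * G (b 3) (b 4) (b 5) (b 6) + d3 2 3 6 (b 0) (b 1) (b 2) * G (b 3) (b 4) (b 5) (b 6) - d3 2 4 5 (b 0) (b 1) (b 2) * G (b 3) (b 4) (b 5) (b 6) := by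
    funext b; rw [phi0c_eq]; ring
  rw [hs]
  simp only [asum_add, asum_sub]
  rw [d3_term G ![0, 1, 2, 3, 4, 5, 6] (1) (by decide) 0 1 2 rfl rfl rfl]
  rw [d3_term G ![0, 3, 4, 1, 2, 5, 6] (Equiv.swap 2 4 * Equiv.swap 1 3) (by decide) 0 3 4 rfl rfl rfl]
  rw [d3_term G ![0, 5, 6, 1, 2, 3, 4] (Equiv.swap 4 6 * Equiv.swap 3 5 * Equiv.swap 2 4 * Equiv.swap 1 3) (by decide) 0 5 6 rfl rfl rfl]
  rw [d3_term G ![1, 3, 5, 0, 2, 4, 6] (Equiv.swap 4 5 * Equiv.swap 2 4 * Equiv.swap 1 3 * Equiv.swap 0 3) (by decide) 1 3 5 rfl rfl rfl]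
  rw [d3_term G ![1, 6, 4, 0, 2, 3, 5] (Equiv.swap 5 6 * Equiv.swap 3 5 * Equiv.swap 2 4 * Equiv.swap 1 3 * Equiv.swap 0 3) (by decide) 1 6 4 rfl rfl rfl]
  rw [d3_term G ![2, 3, 6, 0, 1, 4, 5] (Equiv.swap 5 6 * Equiv.swap 4 5 * Equiv.swap 3 4 * Equiv.swap 2 3 * Equiv.swap 1 4 * Equiv.swap 0 3) (by decide) 2 3 6 rfl rfl rfl]
  rw [d3_term G ![2, 4, 5, 0, 1, 3, 6] (Equiv.swap 3 5 * Equiv.swap 2 3 * Equiv.swap 1 4 * Equiv.swap 0 3) (by decide) 2 4 5 rfl rfl rfl]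
  simp [asum4]
  ring

theorem psic_eq (i j k l : Fin 7) :
    psic i j k l = bf4 i j k l 3 4 5 6 + bf4 i j k l 1 2 5 6 - bf4 i j k l 1 2 3 4 + bf4 i j k l 0 2 4 6 + bf4 i j k l 0 2 3 5 + bf4 i j k l 0 1 4 5 - bf4 i j k l 0 1 3 6 := by
  have h := phi_sum (fun x y z w => bf4 i j k l x y z w)
  unfold psic
  rw [show (∑ σ : Equiv.Perm (Fin 7), ((Equiv.Perm.sign σ : ℤ) : ℝ) * phi0c (σ 0) (σ 1) (σ 2)
      * bf4 i j k l (σ 3) (σ 4) (σ 5) (σ 6)) = _ from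
    (Finset.sum_congr rfl fun σ _ => mul_assoc _ _ _).trans h]
  simp only [asum4_bf4]
  ring

theorem Lop_eq (α : Fin 7 → Fin 7 → ℝ) (hα : Alt2 α) (i j : Fin 7) :
    Lop α i j = lterm α i j 3 4 5 6 + lterm α i j 1 2 5 6 - lterm α i j 1 2 3 4 + lterm α i j 0 2 4 6 + lterm α i j 0 2 3 5 + lterm α i j 0 1 4 5 - lterm α i j 0 1 3 6 := by
  have h := phi_sum (fun x y z w => α x y * bf i j z w)
  unfold Lop
  rw [show (∑ σ : Equiv.Perm (Fin 7), ((Equiv.Perm.sign σ : ℤ) : ℝ) * phi0c (σ 0) (σ 1) (σ 2)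
      * α (σ 3) (σ 4) * bf i j (σ 5) (σ 6)) = _ from
    (Finset.sum_congr rfl fun σ _ => by rw [mul_assoc, mul_assoc]).trans h]
  simp only [asum4_bf α hα]
  ring

theorem starPhiWedge_asum (α : Fin 7 → Fin 7 → ℝ) (a : Fin 6 → Fin 7) :
    starPhiWedge α a =
      asum (fun b : Fin 6 → Fin 7 => psic (b 0) (b 1) (b 2) (b 3) * α (b 4) (b 5)) a := by
  unfold starPhiWedge asum
  exact Finset.sum_congr rfl fun σ _ => mul_assoc _ _ _

/-- the wedge of a basis 4-form with α, evaluated on a tuple -/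
def wterm (α : Fin 7 → Fin 7 → ℝ) (q : Fin 4 → Fin 7) (a : Fin 6 → Fin 7) : ℝ :=
  asum (fun b : Fin 6 → Fin 7 => bf4 (b 0) (b 1) (b 2) (b 3) (q 0) (q 1) (q 2) (q 3)
    * α (b 4) (b 5)) a

theorem wterm_prod (α : Fin 7 → Fin 7 → ℝ) (q : Fin 4 → Fin 7) (a : Fin 6 → Fin 7) :
    wterm α q a = 24 * asum (fun b : Fin 6 → Fin 7 => (∏ i : Fin 4, ind (q i)
      (b (Fin.castLEEmb (show 4 ≤ 6 by norm_num) i))) * α (b 4) (b 5)) a := by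
  have hd := asum_det (Fin.castLEEmb (show 4 ≤ 6 by norm_num)) q
    (fun b : Fin 6 → Fin 7 => α (b 4) (b 5)) (by
      intro b b' hb
      have h4 := hb 4 (by rintro ⟨j, hj⟩; revert hj; revert j; decide)
      have h5 := hb 5 (by rintro ⟨j, hj⟩; revert hj; revert j; decide)
      simp only [h4, h5]) a
  have hfac : ((Nat.factorial 4 : ℕ) : ℝ) = 24 := by norm_num [Nat.factorial]
  rw [hfac] at hd
  rw [← hd]
  unfold wterm
  congr 1
  funext b
  congr 1
  rw [← Matrix.det_transpose]
  unfold bf4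
  congr 1
  ext i j
  fin_cases i <;> fin_cases j <;> exact ind_comm _ _

theorem bf4_miss (α : Fin 7 → Fin 7 → ℝ) (q : Fin 4 → Fin 7) (a : Fin 6 → Fin 7) (k : Fin 4)
    (h : ∀ i, a i ≠ q k) : wterm α q a = 0 := by
  rw [wterm_prod]
  have hm := asum_miss (fun b : Fin 6 → Fin 7 => (∏ i ∈ Finset.univ.erase k, ind (q i)
      (b (Fin.castLEEmb (show 4 ≤ 6 by norm_num) i))) * α (b 4) (b 5)) a
      (Fin.castLEEmb (show 4 ≤ 6 by norm_num) k) (q k) h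
  have e1 : (fun b : Fin 6 → Fin 7 => (∏ i : Fin 4, ind (q i)
      (b (Fin.castLEEmb (show 4 ≤ 6 by norm_num) i))) * α (b 4) (b 5)) =
      fun b => ind (q k) (b (Fin.castLEEmb (show 4 ≤ 6 by norm_num) k)) *
        ((∏ i ∈ Finset.univ.erase k, ind (q i)
      (b (Fin.castLEEmb (show 4 ≤ 6 by norm_num) i))) * α (b 4) (b 5)) := by
    funext b
    rw [← mul_assoc, Finset.mul_prod_erase Finset.univ (fun i => ind (q i)
      (b (Fin.castLEEmb (show 4 ≤ 6 by norm_num) i))) (Finset.mem_univ k)]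
  rw [e1, hm, mul_zero]

theorem bf4_pin (α : Fin 7 → Fin 7 → ℝ) (hα : Alt2 α) (q : Fin 4 → Fin 7) (c a : Fin 6 → Fin 7)
    (π : Equiv.Perm (Fin 6)) (h : ∀ i, a (π i) = c i) (hinj : Function.Injective c)
    (hq : q = ![c 0, c 1, c 2, c 3]) :
    wterm α q a = 48 * (((Equiv.Perm.sign π : ℤ) : ℝ) * α (c 4) (c 5)) := by
  subst hq
  rw [wterm_prod]
  have e1 : (fun b : Fin 6 → Fin 7 => (∏ i : Fin 4, ind ((![c 0, c 1, c 2, c 3] : Fin 4 → Fin 7) i)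
      (b (Fin.castLEEmb (show 4 ≤ 6 by norm_num) i))) * α (b 4) (b 5)) =
      fun b => ind (c 0) (b 0) * (ind (c 1) (b 1) * (ind (c 2) (b 2) * (ind (c 3) (b 3) *
        α (b 4) (b 5)))) := by
    funext b
    rw [Fin.prod_univ_four, mul_assoc, mul_assoc, mul_assoc]
    rfl
  rw [e1]
  have e3 := asum_perm (fun b : Fin 6 → Fin 7 => ind (c 0) (b 0) * (ind (c 1) (b 1) *
    (ind (c 2) (b 2) * (ind (c 3) (b 3) * α (b 4) (b 5))))) a π
  have e4 : (fun i => a (π i)) = c := funext h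
  rw [e4] at e3
  have e5 : asum (fun b : Fin 6 → Fin 7 => ind (c 0) (b 0) * (ind (c 1) (b 1) *
    (ind (c 2) (b 2) * (ind (c 3) (b 3) * α (b 4) (b 5))))) c = 2 * α (c 4) (c 5) := by
    have s1 := asum_pin (fun b : Fin 5 → Fin 7 => ind (c 1) (b 0) *
      (ind (c 2) (b 1) * (ind (c 3) (b 2) * α (b 3) (b 4)))) c hinj
    have s2 := asum_pin (fun b : Fin 4 → Fin 7 => ind (c 2) (b 0) *
      (ind (c 3) (b 1) * α (b 2) (b 3))) (fun i => c i.succ) (hinj.comp (Fin.succ_injective _))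
    have s3 := asum_pin (fun b : Fin 3 → Fin 7 => ind (c 3) (b 0) * α (b 1) (b 2))
      (fun i => c i.succ.succ)
      (hinj.comp ((Fin.succ_injective _).comp (Fin.succ_injective _)))
    have s4 := asum_pin (fun b : Fin 2 → Fin 7 => α (b 0) (b 1))
      (fun i => c i.succ.succ.succ)
      (hinj.comp ((Fin.succ_injective _).comp ((Fin.succ_injective _).comp
        (Fin.succ_injective _))))
    refine (s1.trans (s2.trans (s3.trans s4))).trans ?_
    have e6 : (fun i : Fin 2 => c i.succ.succ.succ.succ) = ![c 4, c 5] := by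
      funext i
      fin_cases i <;> rfl
    rw [e6, asum_two]
    simp only [Matrix.cons_val_zero, Matrix.cons_val_one]
    rw [hα (c 4) (c 5)]
    ring
  rw [e5] at e3
  linear_combination (-24 * ((Equiv.Perm.sign π : ℤ) : ℝ)) * e3 -
    24 * (asum (fun b : Fin 6 → Fin 7 => ind (c 0) (b 0) * (ind (c 1) (b 1) *
    (ind (c 2) (b 2) * (ind (c 3) (b 3) * α (b 4) (b 5))))) a) * sign_sq π

theorem wedge_split (α : Fin 7 → Fin 7 → ℝ) (a : Fin 6 → Fin 7) :
    starPhiWedge α a = wterm α ![3, 4, 5, 6] a + wterm α ![1, 2, 5, 6] a - wterm α ![1, 2, 3, 4] a + wterm α ![0, 2, 4, 6] a + wterm α ![0, 2, 3, 5] a + wterm α ![0, 1, 4, 5] a - wterm α ![0, 1, 3, 6] a := by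
  rw [starPhiWedge_asum]
  have hs : (fun b : Fin 6 → Fin 7 => psic (b 0) (b 1) (b 2) (b 3) * α (b 4) (b 5)) =
      fun b => bf4 (b 0) (b 1) (b 2) (b 3) 3 4 5 6 * α (b 4) (b 5) + bf4 (b 0) (b 1) (b 2) (b 3) 1 2 5 6 * α (b 4) (b 5) - bf4 (b 0) (b 1) (b 2) (b 3) 1 2 3 4 * α (b 4) (b 5) + bf4 (b 0) (b 1) (b 2) (b 3) 0 2 4 6 * α (b 4) (b 5) + bf4 (b 0) (b 1) (b 2) (b 3) 0 2 3 5 * α (b 4) (b 5) + bf4 (b 0) (b 1) (b 2) (b 3) 0 1 4 5 * α (b 4) (b 5) - bf4 (b 0) (b 1) (b 2) (b 3) 0 1 3 6 * α (b 4) (b 5) := by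
    funext b; rw [psic_eq]; ring
  rw [hs]
  simp only [asum_add, asum_sub]
  rfl

theorem wedge_0 (α : Fin 7 → Fin 7 → ℝ) (hα : Alt2 α) :
    starPhiWedge α ![1, 2, 3, 4, 5, 6] = 48 * (α 1 2 + α 3 4 - α 5 6) := by
  rw [wedge_split]
  rw [bf4_pin α hα ![3, 4, 5, 6] ![3, 4, 5, 6, 1, 2] ![1, 2, 3, 4, 5, 6] (Equiv.swap 3 5 * Equiv.swap 2 4 * Equiv.swap 1 5 * Equiv.swap 0 4) (by decide) (by decide) (by decide)]
  rw [bf4_pin α hα ![1, 2, 5, 6] ![1, 2, 5, 6, 3, 4] ![1, 2, 3, 4, 5, 6] (Equiv.swap 3 5 * Equiv.swap 2 4) (by decide) (by decide) (by decide)]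
  rw [bf4_pin α hα ![1, 2, 3, 4] ![1, 2, 3, 4, 5, 6] ![1, 2, 3, 4, 5, 6] (1) (by decide) (by decide) (by decide)]
  rw [bf4_miss α ![0, 2, 4, 6] ![1, 2, 3, 4, 5, 6] 0 (by decide)]
  rw [bf4_miss α ![0, 2, 3, 5] ![1, 2, 3, 4, 5, 6] 0 (by decide)]
  rw [bf4_miss α ![0, 1, 4, 5] ![1, 2, 3, 4, 5, 6] 0 (by decide)]
  rw [bf4_miss α ![0, 1, 3, 6] ![1, 2, 3, 4, 5, 6] 0 (by decide)]
  simp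
  ring

theorem wedge_1 (α : Fin 7 → Fin 7 → ℝ) (hα : Alt2 α) :
    starPhiWedge α ![0, 2, 3, 4, 5, 6] = 48 * (α 0 2 - α 3 5 - α 4 6) := by
  rw [wedge_split]
  rw [bf4_pin α hα ![3, 4, 5, 6] ![3, 4, 5, 6, 0, 2] ![0, 2, 3, 4, 5, 6] (Equiv.swap 3 5 * Equiv.swap 2 4 * Equiv.swap 1 5 * Equiv.swap 0 4) (by decide) (by decide) (by decide)]
  rw [bf4_miss α ![1, 2, 5, 6] ![0, 2, 3, 4, 5, 6] 0 (by decide)]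
  rw [bf4_miss α ![1, 2, 3, 4] ![0, 2, 3, 4, 5, 6] 0 (by decide)]
  rw [bf4_pin α hα ![0, 2, 4, 6] ![0, 2, 4, 6, 3, 5] ![0, 2, 3, 4, 5, 6] (Equiv.swap 4 5 * Equiv.swap 3 4 * Equiv.swap 2 4) (by decide) (by decide) (by decide)]
  rw [bf4_pin α hα ![0, 2, 3, 5] ![0, 2, 3, 5, 4, 6] ![0, 2, 3, 4, 5, 6] (Equiv.swap 3 4) (by decide) (by decide) (by decide)]
  rw [bf4_miss α ![0, 1, 4, 5] ![0, 2, 3, 4, 5, 6] 1 (by decide)]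
  rw [bf4_miss α ![0, 1, 3, 6] ![0, 2, 3, 4, 5, 6] 1 (by decide)]
  simp
  ring

theorem wedge_2 (α : Fin 7 → Fin 7 → ℝ) (hα : Alt2 α) :
    starPhiWedge α ![0, 1, 3, 4, 5, 6] = 48 * (α 0 1 + α 3 6 - α 4 5) := by
  rw [wedge_split]
  rw [bf4_pin α hα ![3, 4, 5, 6] ![3, 4, 5, 6, 0, 1] ![0, 1, 3, 4, 5, 6] (Equiv.swap 3 5 * Equiv.swap 2 4 * Equiv.swap 1 5 * Equiv.swap 0 4) (by decide) (by decide) (by decide)]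
  rw [bf4_miss α ![1, 2, 5, 6] ![0, 1, 3, 4, 5, 6] 1 (by decide)]
  rw [bf4_miss α ![1, 2, 3, 4] ![0, 1, 3, 4, 5, 6] 1 (by decide)]
  rw [bf4_miss α ![0, 2, 4, 6] ![0, 1, 3, 4, 5, 6] 1 (by decide)]
  rw [bf4_miss α ![0, 2, 3, 5] ![0, 1, 3, 4, 5, 6] 1 (by decide)]
  rw [bf4_pin α hα ![0, 1, 4, 5] ![0, 1, 4, 5, 3, 6] ![0, 1, 3, 4, 5, 6] (Equiv.swap 3 4 * Equiv.swap 2 4) (by decide) (by decide) (by decide)]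
  rw [bf4_pin α hα ![0, 1, 3, 6] ![0, 1, 3, 6, 4, 5] ![0, 1, 3, 4, 5, 6] (Equiv.swap 4 5 * Equiv.swap 3 4) (by decide) (by decide) (by decide)]
  simp
  ring

theorem wedge_3 (α : Fin 7 → Fin 7 → ℝ) (hα : Alt2 α) :
    starPhiWedge α ![0, 1, 2, 4, 5, 6] = 48 * (α 0 4 + α 1 5 + α 2 6) := by
  rw [wedge_split]
  rw [bf4_miss α ![3, 4, 5, 6] ![0, 1, 2, 4, 5, 6] 0 (by decide)]
  rw [bf4_pin α hα ![1, 2, 5, 6] ![1, 2, 5, 6, 0, 4] ![0, 1, 2, 4, 5, 6] (Equiv.swap 3 5 * Equiv.swap 2 4 * Equiv.swap 1 4 * Equiv.swap 0 4) (by decide) (by decide) (by decide)]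
  rw [bf4_miss α ![1, 2, 3, 4] ![0, 1, 2, 4, 5, 6] 2 (by decide)]
  rw [bf4_pin α hα ![0, 2, 4, 6] ![0, 2, 4, 6, 1, 5] ![0, 1, 2, 4, 5, 6] (Equiv.swap 4 5 * Equiv.swap 3 4 * Equiv.swap 2 4 * Equiv.swap 1 4) (by decide) (by decide) (by decide)]
  rw [bf4_miss α ![0, 2, 3, 5] ![0, 1, 2, 4, 5, 6] 2 (by decide)]
  rw [bf4_pin α hα ![0, 1, 4, 5] ![0, 1, 4, 5, 2, 6] ![0, 1, 2, 4, 5, 6] (Equiv.swap 3 4 * Equiv.swap 2 4) (by decide) (by decide) (by decide)]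
  rw [bf4_miss α ![0, 1, 3, 6] ![0, 1, 2, 4, 5, 6] 2 (by decide)]
  simp
  ring

theorem wedge_4 (α : Fin 7 → Fin 7 → ℝ) (hα : Alt2 α) :
    starPhiWedge α ![0, 1, 2, 3, 5, 6] = 48 * (α 0 3 - α 1 6 + α 2 5) := by
  rw [wedge_split]
  rw [bf4_miss α ![3, 4, 5, 6] ![0, 1, 2, 3, 5, 6] 1 (by decide)]
  rw [bf4_pin α hα ![1, 2, 5, 6] ![1, 2, 5, 6, 0, 3] ![0, 1, 2, 3, 5, 6] (Equiv.swap 3 5 * Equiv.swap 2 4 * Equiv.swap 1 4 * Equiv.swap 0 4) (by decide) (by decide) (by decide)]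
  rw [bf4_miss α ![1, 2, 3, 4] ![0, 1, 2, 3, 5, 6] 3 (by decide)]
  rw [bf4_miss α ![0, 2, 4, 6] ![0, 1, 2, 3, 5, 6] 2 (by decide)]
  rw [bf4_pin α hα ![0, 2, 3, 5] ![0, 2, 3, 5, 1, 6] ![0, 1, 2, 3, 5, 6] (Equiv.swap 3 4 * Equiv.swap 2 4 * Equiv.swap 1 4) (by decide) (by decide) (by decide)]
  rw [bf4_miss α ![0, 1, 4, 5] ![0, 1, 2, 3, 5, 6] 2 (by decide)]
  rw [bf4_pin α hα ![0, 1, 3, 6] ![0, 1, 3, 6, 2, 5] ![0, 1, 2, 3, 5, 6] (Equiv.swap 4 5 * Equiv.swap 3 4 * Equiv.swap 2 4) (by decide) (by decide) (by decide)]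
  simp
  ring

theorem wedge_5 (α : Fin 7 → Fin 7 → ℝ) (hα : Alt2 α) :
    starPhiWedge α ![0, 1, 2, 3, 4, 6] = 48 * (- α 0 6 - α 1 3 + α 2 4) := by
  rw [wedge_split]
  rw [bf4_miss α ![3, 4, 5, 6] ![0, 1, 2, 3, 4, 6] 2 (by decide)]
  rw [bf4_miss α ![1, 2, 5, 6] ![0, 1, 2, 3, 4, 6] 2 (by decide)]
  rw [bf4_pin α hα ![1, 2, 3, 4] ![1, 2, 3, 4, 0, 6] ![0, 1, 2, 3, 4, 6] (Equiv.swap 3 4 * Equiv.swap 2 4 * Equiv.swap 1 4 * Equiv.swap 0 4) (by decide) (by decide) (by decide)]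
  rw [bf4_pin α hα ![0, 2, 4, 6] ![0, 2, 4, 6, 1, 3] ![0, 1, 2, 3, 4, 6] (Equiv.swap 3 5 * Equiv.swap 2 4 * Equiv.swap 1 4) (by decide) (by decide) (by decide)]
  rw [bf4_miss α ![0, 2, 3, 5] ![0, 1, 2, 3, 4, 6] 3 (by decide)]
  rw [bf4_miss α ![0, 1, 4, 5] ![0, 1, 2, 3, 4, 6] 3 (by decide)]
  rw [bf4_pin α hα ![0, 1, 3, 6] ![0, 1, 3, 6, 2, 4] ![0, 1, 2, 3, 4, 6] (Equiv.swap 4 5 * Equiv.swap 3 4 * Equiv.swap 2 4) (by decide) (by decide) (by decide)]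
  simp
  ring

theorem wedge_6 (α : Fin 7 → Fin 7 → ℝ) (hα : Alt2 α) :
    starPhiWedge α ![0, 1, 2, 3, 4, 5] = 48 * (- α 0 5 + α 1 4 + α 2 3) := by
  rw [wedge_split]
  rw [bf4_miss α ![3, 4, 5, 6] ![0, 1, 2, 3, 4, 5] 3 (by decide)]
  rw [bf4_miss α ![1, 2, 5, 6] ![0, 1, 2, 3, 4, 5] 3 (by decide)]
  rw [bf4_pin α hα ![1, 2, 3, 4] ![1, 2, 3, 4, 0, 5] ![0, 1, 2, 3, 4, 5] (Equiv.swap 3 4 * Equiv.swap 2 4 * Equiv.swap 1 4 * Equiv.swap 0 4) (by decide) (by decide) (by decide)]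
  rw [bf4_miss α ![0, 2, 4, 6] ![0, 1, 2, 3, 4, 5] 3 (by decide)]
  rw [bf4_pin α hα ![0, 2, 3, 5] ![0, 2, 3, 5, 1, 4] ![0, 1, 2, 3, 4, 5] (Equiv.swap 4 5 * Equiv.swap 3 4 * Equiv.swap 2 4 * Equiv.swap 1 4) (by decide) (by decide) (by decide)]
  rw [bf4_pin α hα ![0, 1, 4, 5] ![0, 1, 4, 5, 2, 3] ![0, 1, 2, 3, 4, 5] (Equiv.swap 3 5 * Equiv.swap 2 4) (by decide) (by decide) (by decide)]
  rw [bf4_miss α ![0, 1, 3, 6] ![0, 1, 2, 3, 4, 5] 3 (by decide)]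
  simp
  ring

/-- The 6-form vanishes as soon as it vanishes on the seven increasing tuples. -/
theorem wedge_zero (α : Fin 7 → Fin 7 → ℝ)
    (h : ∀ p : Fin 7, starPhiWedge α (fun i => p.succAbove i) = 0) (a : Fin 6 → Fin 7) :
    starPhiWedge α a = 0 := by
  by_cases ha : Function.Injective a
  · have hns : ¬ Function.Surjective a := by
      intro hs
      have := Fintype.card_le_of_surjective a hs
      simp at this
    obtain ⟨p, hp⟩ := not_forall.mp hns
    have hne : ∀ i, ∃ j, p.succAbove j = a i := fun i =>
      Fin.exists_succAbove_eq (fun hi => hp ⟨i, hi⟩)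
    choose t ht using hne
    have htinj : Function.Injective t := by
      intro x y hxy
      apply ha
      rw [← ht x, ← ht y, hxy]
    have hb : Function.Bijective t := Finite.injective_iff_bijective.mp htinj
    have e1 : a = fun i => (fun j => p.succAbove j) ((Equiv.ofBijective t hb) i) := by
      funext i
      simp [ht]
    rw [e1, starPhiWedge_asum, asum_perm, ← starPhiWedge_asum, h p, mul_zero]
  · simp only [Function.Injective, not_forall] at ha
    obtain ⟨x, y, hxy, hne⟩ := ha
    have e1 : (fun i => a (Equiv.swap x y i)) = a := by
      funext i
      by_cases h1 : i = x
      · subst h1; simp [hxy]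
      · by_cases h2 : i = y
        · subst h2; simp [hxy]
        · rw [Equiv.swap_apply_of_ne_of_ne h1 h2]
    have e2 := asum_perm (fun b : Fin 6 → Fin 7 => psic (b 0) (b 1) (b 2) (b 3) * α (b 4) (b 5))
      a (Equiv.swap x y)
    rw [e1, Equiv.Perm.sign_swap hne] at e2
    rw [starPhiWedge_asum]
    simp at e2
    linarith

/-- the eigenspace Λ²₁₄ = {α : ⋆(φ₀∧α) = α} coincides with the
kernel of α ↦ (⋆φ₀) ∧ α. -/
theorem stmt12 (α : Fin 7 → Fin 7 → ℝ) (hα : Alt2 α) :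
    (∀ i j, Lop α i j = α i j) ↔ (∀ a : Fin 6 → Fin 7, starPhiWedge α a = 0) := by
  have hz : ∀ i, α i i = 0 := fun i => by
    have := hα i i
    linarith
  constructor
  · intro hL
    have c0 : α 1 2 + α 3 4 - α 5 6 = 0 := by
      have h := hL 1 2
      rw [Lop_eq α hα] at h
      simp [lterm, bf] at h
      linarith
    have c1 : α 0 2 - α 3 5 - α 4 6 = 0 := by
      have h := hL 0 2
      rw [Lop_eq α hα] at h
      simp [lterm, bf] at h
      linarith
    have c2 : α 0 1 + α 3 6 - α 4 5 = 0 := by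
      have h := hL 0 1
      rw [Lop_eq α hα] at h
      simp [lterm, bf] at h
      linarith
    have c3 : α 0 4 + α 1 5 + α 2 6 = 0 := by
      have h := hL 0 4
      rw [Lop_eq α hα] at h
      simp [lterm, bf] at h
      linarith
    have c4 : α 0 3 - α 1 6 + α 2 5 = 0 := by
      have h := hL 0 3
      rw [Lop_eq α hα] at h
      simp [lterm, bf] at h
      linarith
    have c5 : - α 0 6 - α 1 3 + α 2 4 = 0 := by
      have h := hL 0 6
      rw [Lop_eq α hα] at h
      simp [lterm, bf] at h
      linarith
    have c6 : - α 0 5 + α 1 4 + α 2 3 = 0 := by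
      have h := hL 0 5
      rw [Lop_eq α hα] at h
      simp [lterm, bf] at h
      linarith
    apply wedge_zero
    intro p
    fin_cases p
    · refine Eq.trans (congrArg (starPhiWedge α) ?_) ((wedge_0 α hα).trans (by rw [c0, mul_zero]))
      funext i; fin_cases i <;> rfl
    · refine Eq.trans (congrArg (starPhiWedge α) ?_) ((wedge_1 α hα).trans (by rw [c1, mul_zero]))
      funext i; fin_cases i <;> rfl
    · refine Eq.trans (congrArg (starPhiWedge α) ?_) ((wedge_2 α hα).trans (by rw [c2, mul_zero]))
      funext i; fin_cases i <;> rfl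
    · refine Eq.trans (congrArg (starPhiWedge α) ?_) ((wedge_3 α hα).trans (by rw [c3, mul_zero]))
      funext i; fin_cases i <;> rfl
    · refine Eq.trans (congrArg (starPhiWedge α) ?_) ((wedge_4 α hα).trans (by rw [c4, mul_zero]))
      funext i; fin_cases i <;> rfl
    · refine Eq.trans (congrArg (starPhiWedge α) ?_) ((wedge_5 α hα).trans (by rw [c5, mul_zero]))
      funext i; fin_cases i <;> rfl
    · refine Eq.trans (congrArg (starPhiWedge α) ?_) ((wedge_6 α hα).trans (by rw [c6, mul_zero]))
      funext i; fin_cases i <;> rfl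
  · intro h
    have c0 := h ![1, 2, 3, 4, 5, 6]
    rw [wedge_0 α hα] at c0
    have c1 := h ![0, 2, 3, 4, 5, 6]
    rw [wedge_1 α hα] at c1
    have c2 := h ![0, 1, 3, 4, 5, 6]
    rw [wedge_2 α hα] at c2
    have c3 := h ![0, 1, 2, 4, 5, 6]
    rw [wedge_3 α hα] at c3
    have c4 := h ![0, 1, 2, 3, 5, 6]
    rw [wedge_4 α hα] at c4
    have c5 := h ![0, 1, 2, 3, 4, 6]
    rw [wedge_5 α hα] at c5
    have c6 := h ![0, 1, 2, 3, 4, 5]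
    rw [wedge_6 α hα] at c6
    intro i j
    rw [Lop_eq α hα]
    rcases lt_trichotomy i j with hij | hij | hij
    · fin_cases i <;> fin_cases j <;> first | (exfalso; revert hij; decide) | (simp [lterm, bf]; linarith)
    · subst hij
      simp [lterm, bf, hz]
    · rw [hα j i]
      fin_cases i <;> fin_cases j <;> first | (exfalso; revert hij; decide) | (simp [lterm, bf]; linarith)
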